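/- arXiv:2108.13968 — 2 statements merged into one kernel-verified Lean document; each statement's English description precedes it below -/
import Mathlib

section
/- Let w be a word over Σ with alph(w) = Σ. If |sas(w)| = |mas(w)|, then every letter of Σ occurs exactly ι(w) times in w (hence every arch of w contains every letter exactly once and r(w) = ε). -/
/-!
Every SAS is a MAS, and there are only finitely many MAS, since a MAS of `w` has length at most
`|w| + 1` over the finite alphabet `alph(w)`. Hence `|sas(w)| = |mas(w)|` forces every MAS to be
an SAS. For each letter `a` the word `a ^ (|w|_a + 1)` is a MAS, so it is an SAS; as an SAS has
length `ι(w) + 1`, the letter `a` occurs exactly `ι(w)` times.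
-/

/-- `v` is a minimal absent subsequence (MAS) of `w`: `v` is a word over `alph(w)` which is
not a subsequence of `w`, but every proper subsequence of `v` is a subsequence of `w`. -/
def IsMAS {α : Type*} (w v : List α) : Prop :=
  (∀ a ∈ v, a ∈ w) ∧ ¬ v.Sublist w ∧
    ∀ u : List α, u.Sublist v → u ≠ v → u.Sublist w

/-- `v` is a shortest absent subsequence (SAS) of `w`: `v` is a word over `alph(w)`
which is not a subsequence of `w`, of minimal length with this property. -/
def IsSAS {α : Type*} (w v : List α) : Prop :=
  (∀ a ∈ v, a ∈ w) ∧ ¬ v.Sublist w ∧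
    ∀ u : List α, (∀ a ∈ u, a ∈ w) → ¬ u.Sublist w → v.length ≤ u.length

/-- The universality index `ι(w)`: the largest `k` such that every word of length at most `k`
over `alph(w)` is a subsequence of `w`. -/
noncomputable def univIndex {α : Type*} (w : List α) : ℕ :=
  sSup {k | ∀ v : List α, (∀ a ∈ v, a ∈ w) → v.length ≤ k → v.Sublist w}

theorem IsSAS.isMAS {α : Type*} {w v : List α} (h : IsSAS w v) : IsMAS w v := by
  obtain ⟨hv, hn, hmin⟩ := h
  refine ⟨hv, hn, fun u hu hne => ?_⟩
  by_contra hc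
  exact hne (hu.eq_of_length_le (hmin u (fun a ha => hv a (hu.subset ha)) hc))

theorem IsMAS.length_le {α : Type*} {w v : List α} (h : IsMAS w v) :
    v.length ≤ w.length + 1 := by
  obtain ⟨-, hn, hmin⟩ := h
  cases v with
  | nil => simp
  | cons a t =>
    have := (hmin t (List.sublist_cons_self a t) (by simp)).length_le
    simpa using this

theorem isMAS_replicate {α : Type*} [DecidableEq α] {w : List α} {a : α} (ha : a ∈ w) :
    IsMAS w (List.replicate (w.count a + 1) a) := by
  refine ⟨fun b hb => List.eq_of_mem_replicate hb ▸ ha, fun hs => ?_, fun u hu hne => ?_⟩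
  · have := List.replicate_sublist_iff.1 hs
    omega
  · obtain ⟨n, hn, rfl⟩ := List.sublist_replicate_iff.1 hu
    have hlt : n ≠ w.count a + 1 := fun e => hne (by rw [e])
    exact List.replicate_sublist_iff.2 (by omega)

theorem IsSAS.length_eq {α : Type*} {w v : List α} (h : IsSAS w v) :
    v.length = univIndex w + 1 := by
  obtain ⟨hv, hn, hmin⟩ := h
  have hpos : v.length ≠ 0 := fun h0 => hn (by simp [List.length_eq_zero_iff.1 h0])
  have hg : IsGreatest {k | ∀ u : List α, (∀ a ∈ u, a ∈ w) → u.length ≤ k → u.Sublist w}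
      (v.length - 1) := by
    refine ⟨fun u hu hl => ?_, fun k hk => ?_⟩
    · by_contra hc
      have := hmin u hu hc
      omega
    · by_contra hc
      exact hn (hk v hv (by omega))
  have : univIndex w = v.length - 1 := hg.csSup_eq
  omega

/-- If `alph(w) = Σ` and `|sas(w)| = |mas(w)|`, then every letter of `Σ` occurs exactly
`ι(w)` times in `w`. -/
theorem count_eq_univIndex_of_card_sas_eq_card_mas {α : Type*} [DecidableEq α]
    (w : List α) (hw : ∀ a : α, a ∈ w)
    (h : Set.ncard {v : List α | IsSAS w v} = Set.ncard {v : List α | IsMAS w v}) :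
    ∀ a : α, w.count a = univIndex w := by
  intro a
  have : Finite α := Set.finite_univ_iff.1 (w.finite_toSet.subset fun b _ => hw b)
  have hfin : {v : List α | IsMAS w v}.Finite :=
    (List.finite_length_le α (w.length + 1)).subset fun v hv => hv.length_le
  have heq : {v : List α | IsSAS w v} = {v : List α | IsMAS w v} :=
    Set.eq_of_subset_of_ncard_le (fun v hv => hv.isMAS) h.ge hfin
  have hs : IsSAS w (List.replicate (w.count a + 1) a) :=
    heq.ge (isMAS_replicate (hw a))
  simpa using hs.length_eq
end

section
/- Let w be a word over a linearly ordered alphabet Σ with alph(w) = Σ, and let a be the smallest letter of Σ occurring in w. Then a^{|w|_a + 1} is the lexicographically smallest minimal absent subsequence of w. -/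
/-- A word that is not lexicographically above `a^n`, for the smallest letter `a`, must be some
`a^k` with `k ≤ n`: its first letter other than `a` would make it larger. -/
theorem lex_replicate_or_sublist {α : Type*} [LinearOrder α] (a : α) (ha : ∀ x : α, a ≤ x)
    (n : ℕ) (v : List α) :
    List.Lex (· < ·) (List.replicate n a) v ∨ v.Sublist (List.replicate n a) := by
  induction n generalizing v with
  | zero =>
    cases v with
    | nil => exact .inr (List.nil_sublist _)
    | cons b v => exact .inl .nil
  | succ n ih =>
    cases v with
    | nil => exact .inr (List.nil_sublist _)
    | cons b v =>
      rw [List.replicate_succ]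
      rcases (ha b).eq_or_lt with rfl | hb
      · exact (ih v).imp .cons (·.cons_cons a)
      · exact .inl (.rel hb)

theorem isMAS_replicate_count_succ {α : Type*} [DecidableEq α] (w : List α) (a : α)
    (haw : a ∈ w) : IsMAS w (List.replicate (w.count a + 1) a) := by
  refine ⟨fun b hb => List.eq_of_mem_replicate hb ▸ haw, fun h => ?_, fun u hu hne => ?_⟩
  · have := List.replicate_sublist_iff.mp h
    omega
  · obtain ⟨m, hm, rfl⟩ := List.sublist_replicate_iff.mp hu
    have hm' : m ≠ w.count a + 1 := fun h => hne (h ▸ rfl)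
    exact List.replicate_sublist_iff.mpr (by omega)

/-- For a word `w` over a linearly ordered alphabet `Σ` with `alph(w) = Σ`, and `a` the
smallest letter of `Σ`, the word `a^{|w|ₐ+1}` is the lexicographically smallest MAS of `w`
(lexicographic order: `List.Lex (· < ·)`, where a proper prefix is smaller). -/
theorem replicate_smallest_isLexSmallest_mas {α : Type*} [LinearOrder α]
    (w : List α) (hw : ∀ x : α, x ∈ w) (a : α) (ha : ∀ x : α, a ≤ x) :
    IsMAS w (List.replicate (w.count a + 1) a) ∧
      ∀ v : List α, IsMAS w v → v ≠ List.replicate (w.count a + 1) a →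
        List.Lex (· < ·) (List.replicate (w.count a + 1) a) v := by
  have hmas := isMAS_replicate_count_succ w a (hw a)
  refine ⟨hmas, fun v hv hne => ?_⟩
  exact (lex_replicate_or_sublist a ha _ v).resolve_right fun hsub => hv.2.1 (hmas.2.2 v hsub hne)
end
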